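/- For g ∈ GL₃(ℂ), the following are equivalent: (i) g permutes the nine points projectively, i.e., for every (i,j) ∈ 𝔽₃ × 𝔽₃ there exist (k,m) ∈ 𝔽₃ × 𝔽₃ and c ∈ ℂ* with g·t_{i,j} = c·t_{k,m}; (ii) the substitution map f ↦ f∘g maps the Hesse pencil L into itself. (This is the equality N_{PGL₃}(𝓕) = N_{PGL₃}(ℓ) of normalizers defining the Hessian group.) -/

import Mathlib

open MvPolynomial

/-- The nine flexes `t_{i,j}` of the Hesse configuration, indexed by `𝔽₃ × 𝔽₃`:
`t_{0,j} = (0, −εʲ, 1)`, `t_{1,j} = (1, 0, −εʲ)`, `t_{2,j} = (−εʲ, 1, 0)`. -/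
noncomputable def tpt (ε : ℂ) (ij : ZMod 3 × ZMod 3) : Fin 3 → ℂ :=
  ![![0, -(ε ^ ij.2.val), 1], ![1, 0, -(ε ^ ij.2.val)], ![-(ε ^ ij.2.val), 1, 0]]
    ⟨ij.1.val, ZMod.val_lt ij.1⟩

/-- The Hesse pencil of cubic forms `{α(x₀³+x₁³+x₂³) + β·x₀x₁x₂}`. -/
def hessePencil : Set (MvPolynomial (Fin 3) ℂ) :=
  {f | ∃ α β : ℂ,
    f = C α * ((X 0) ^ 3 + (X 1) ^ 3 + (X 2) ^ 3) + C β * (X 0 * X 1 * X 2)}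

/-- The linear substitution `f ∘ g`, i.e. `x_i ↦ Σ_j g_{ij} x_j`, so that
`(f∘g)(v) = f(g·v)`. -/
noncomputable def substGL (g : Matrix.GeneralLinearGroup (Fin 3) ℂ)
    (f : MvPolynomial (Fin 3) ℂ) : MvPolynomial (Fin 3) ℂ :=
  aeval (fun i : Fin 3 => ∑ j : Fin 3, C ((g : Matrix (Fin 3) (Fin 3) ℂ) i j) * X j) f

/-!
The nine flexes are exactly the base points of the pencil, and the pencil consists of exactly those
cubic forms that vanish at all nine. Hence each side of the equivalence says that `f (g t) = 0` for
every `f` in the pencil and every flex `t`.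

For the second fact, subtract from a cubic form vanishing at the flexes the multiple of
`x₀³ + x₁³ + x₂³` that makes it vanish at the vertex `(1, 0, 0)` of the triangle `x₀x₁x₂ = 0`. Each
side of the triangle contains three flexes and two vertices. So the difference has four zeros on a
side through a known vertex, hence vanishes on it and at its other vertex; going around the
triangle, it vanishes on all three sides and is a multiple of `x₀x₁x₂`.
-/

section Forms

variable {σ τ K : Type*}

lemma eval_aeval [CommSemiring K] (v : τ → K) (g : σ → MvPolynomial τ K) (f : MvPolynomial σ K) :
    eval v (aeval g f) = eval (fun i => eval v (g i)) f :=
  eval₂Hom_bind₁ (RingHom.id K) v g f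

lemma eval_smul_of_isHomogeneous [CommSemiring K] {f : MvPolynomial σ K} {n : ℕ}
    (hf : f.IsHomogeneous n) (c : K) (v : σ → K) : eval (c • v) f = c ^ n * eval v f := by
  rw [eval_eq, eval_eq, Finset.mul_sum]
  refine Finset.sum_congr rfl fun d hd => ?_
  simp only [Pi.smul_apply, smul_eq_mul, mul_pow, Finset.prod_mul_distrib,
    Finset.prod_pow_eq_pow_sum, ← hf.degree_eq_sum_deg_support hd]
  ring

lemma exists_polynomial_eval_eq_eval_add_smul [CommSemiring K] {f : MvPolynomial σ K} {n : ℕ}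
    (hf : f.totalDegree ≤ n) (p q : σ → K) :
    ∃ P : Polynomial K, P.natDegree ≤ n ∧ ∀ t, P.eval t = eval (p + t • q) f := by
  refine ⟨aeval (fun i => Polynomial.C (p i) + Polynomial.C (q i) * Polynomial.X) f,
    ?_, fun t => ?_⟩
  · simpa only [mul_one] using aeval_natDegree_le f hf _ fun i =>
      Polynomial.natDegree_add_le_of_degree_le ((Polynomial.natDegree_C _).trans_le zero_le_one)
        ((Polynomial.natDegree_C_mul_le _ _).trans Polynomial.natDegree_X_le)
  · rw [← Polynomial.coe_aeval_eq_eval, ← AlgHom.comp_apply, comp_aeval, aeval_eq_eval]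
    congr 2
    funext i
    rw [Polynomial.coe_aeval_eq_eval, Polynomial.eval_add, Polynomial.eval_mul, Polynomial.eval_C,
      Polynomial.eval_C, Polynomial.eval_X, mul_comm, Pi.add_apply, Pi.smul_apply, smul_eq_mul]

lemma exists_isHomogeneous_eval_eq_eval_smul_add_smul [CommSemiring K] {f : MvPolynomial σ K}
    {n : ℕ} (hf : f.IsHomogeneous n) (p q : σ → K) :
    ∃ G : MvPolynomial (Fin 2) K, G.IsHomogeneous n ∧
      ∀ w, eval w G = eval (w 0 • p + w 1 • q) f := by
  refine ⟨aeval (fun i => C (p i) * X 0 + C (q i) * X 1) f, ?_, fun w => ?_⟩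
  · simpa only [one_mul] using hf.aeval _ fun i =>
      (isHomogeneous_C_mul_X (p i) 0).add (isHomogeneous_C_mul_X (q i) 1)
  · rw [eval_aeval]
    congr 2
    ext i
    simp [mul_comm]

lemma eval_smul_add_smul_eq_zero_of_lt_card [Field K] {f : MvPolynomial σ K} {n : ℕ}
    (hf : f.IsHomogeneous n) {p q : σ → K} {s : Finset K} (hs : n < s.card)
    (hzero : ∀ t ∈ s, eval (p + t • q) f = 0) (a b : K) : eval (a • p + b • q) f = 0 := by
  have haffine (t : K) : eval (p + t • q) f = 0 := by
    obtain ⟨P, hdeg, hP⟩ := exists_polynomial_eval_eq_eval_add_smul hf.totalDegree_le p q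
    rw [← hP, Polynomial.eq_zero_of_natDegree_lt_card_of_eval_eq_zero' P s
      (fun t ht => (hP t).trans (hzero t ht)) (hdeg.trans_lt hs), Polynomial.eval_zero]
  obtain ⟨G, hG, hG_eval⟩ := exists_isHomogeneous_eval_eq_eval_smul_add_smul hf p q
  -- The factor `X 0` takes care of the point `q`, which is not of the form `p + t • q`.
  have hXG : X 0 * G = 0 := by
    refine ((isHomogeneous_X K 0).mul hG).eq_zero_of_forall_eval_eq_zero_of_le_card
      (fun w => ?_) ?_
    · rw [map_mul, eval_X, hG_eval, mul_eq_zero, or_iff_not_imp_left]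
      intro hw
      rw [← mul_inv_cancel_left₀ hw (w 1), mul_smul, ← smul_add, eval_smul_of_isHomogeneous hf,
        haffine, mul_zero]
    · calc ((1 + n : ℕ) : Cardinal) ≤ s.card := by exact_mod_cast (by lia : 1 + n ≤ s.card)
        _ ≤ Cardinal.mk K := by simpa using Cardinal.mk_set_le (s : Set K)
  have hG_zero : G = 0 := (mul_eq_zero.1 hXG).resolve_left (X_ne_zero 0)
  simpa [hG_zero, eq_comm] using hG_eval ![a, b]

lemma X_dvd_of_aeval_update_eq_zero [CommRing K] [DecidableEq σ] {f : MvPolynomial σ K} {i : σ}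
    (h : aeval (Function.update X i (0 : MvPolynomial σ K)) f = 0) : X i ∣ f := by
  let π := Ideal.Quotient.mkₐ K (Ideal.span {(X i : MvPolynomial σ K)})
  have hπ (j : σ) : π (Function.update X i 0 j) = π (X j) := by
    rcases eq_or_ne j i with rfl | hji
    · simp [π]
    · rw [Function.update_of_ne hji]
  rw [← Ideal.mem_span_singleton, ← Ideal.Quotient.eq_zero_iff_mem]
  calc π f = aeval (fun j => π (X j)) f := by rw [← comp_aeval_apply, aeval_X_left_apply]
    _ = π (aeval (Function.update X i 0) f) := by simp only [comp_aeval_apply, hπ]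
    _ = 0 := by rw [h, map_zero]

lemma X_dvd_of_forall_eval_eq_zero [CommRing K] [IsDomain K] {f : MvPolynomial σ K} {n : ℕ}
    (hf : f.IsHomogeneous n) (hn : n ≤ Cardinal.mk K) {i : σ}
    (h : ∀ v : σ → K, v i = 0 → eval v f = 0) : X i ∣ f := by
  classical
  refine X_dvd_of_aeval_update_eq_zero ?_
  have hrestrict : (aeval (Function.update X i (0 : MvPolynomial σ K)) f).IsHomogeneous n := by
    rw [← one_mul n]
    refine hf.aeval _ fun j => ?_
    rcases eq_or_ne j i with rfl | hji
    · simpa using isHomogeneous_zero σ K 1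
    · simpa [hji] using isHomogeneous_X K j
  refine hrestrict.eq_zero_of_forall_eval_eq_zero_of_le_card (fun v => ?_) hn
  rw [eval_aeval]
  exact h _ (by simp)

lemma prod_X_dvd [Field K] {f : MvPolynomial σ K} (s : Finset σ) (h : ∀ i ∈ s, X i ∣ f) :
    ∏ i ∈ s, X i ∣ f :=
  Finset.prod_dvd_of_isRelPrime
    (fun _ _ _ _ hij => X_prime.irreducible.isRelPrime_iff_not_dvd.2 fun hdvd =>
      hij (X_dvd_X.1 hdvd)) h

lemma isHomogeneous_prod_X [Fintype σ] [CommSemiring K] :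
    (∏ i, X i : MvPolynomial σ K).IsHomogeneous (Fintype.card σ) := by
  simpa using IsHomogeneous.prod Finset.univ _ _ fun i _ => isHomogeneous_X K i

lemma exists_eq_smul_prod_X_of_forall_eval_eq_zero [Fintype σ] [Field K] {f : MvPolynomial σ K}
    (hf : f.IsHomogeneous (Fintype.card σ)) (hK : Fintype.card σ ≤ Cardinal.mk K)
    (h : ∀ i, ∀ v : σ → K, v i = 0 → eval v f = 0) : ∃ c : K, f = c • ∏ i, X i := by
  rcases eq_or_ne f 0 with rfl | hf_ne
  · exact ⟨0, (zero_smul K _).symm⟩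
  obtain ⟨q, hq⟩ := prod_X_dvd Finset.univ fun i _ => X_dvd_of_forall_eval_eq_zero hf hK (h i)
  obtain ⟨hprod_ne, hq_ne⟩ := mul_ne_zero_iff.1 (hq ▸ hf_ne)
  have hq_degree : q.totalDegree = 0 := by
    have hdegree := totalDegree_mul_of_isDomain hprod_ne hq_ne
    rw [← hq, hf.totalDegree hf_ne, isHomogeneous_prod_X.totalDegree hprod_ne] at hdegree
    lia
  exact ⟨_, by rw [smul_eq_C_mul, mul_comm, ← totalDegree_eq_zero_iff_eq_C.1 hq_degree, hq]⟩

lemma isHomogeneous_aeval_toMvPolynomial [Fintype τ] [CommSemiring K] {f : MvPolynomial σ K} {n : ℕ}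
    (hf : f.IsHomogeneous n) (M : Matrix σ τ K) :
    (aeval M.toMvPolynomial f).IsHomogeneous n := by
  simpa only [one_mul] using hf.aeval _ M.toMvPolynomial_isHomogeneous

lemma eval_aeval_toMvPolynomial [Fintype τ] [CommSemiring K] (M : Matrix σ τ K)
    (f : MvPolynomial σ K) (v : τ → K) :
    eval v (aeval M.toMvPolynomial f) = eval (M.mulVec v) f := by
  simp only [eval_aeval, Matrix.toMvPolynomial_eval_eq_apply]

end Forms

section HesseConfiguration

variable {K : Type*} [Field K]

variable (K) in
/-- The Hesse pencil over an arbitrary field, as a subspace of the cubic forms. -/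
noncomputable def hesseSubmodule : Submodule K (MvPolynomial (Fin 3) K) :=
  Submodule.span K {∑ i, X i ^ 3, ∏ i, X i}

/-- The point with `x_k = 0`, `x_{k+1} = -ζ`, `x_{k+2} = 1`, indices being read modulo `3`. The
cyclic numbering treats the three sides of the triangle `x₀x₁x₂ = 0` uniformly. -/
def sidePoint (k : Fin 3) (ζ : K) : Fin 3 → K :=
  Pi.single (k + 2) 1 - Pi.single (k + 1) ζ

variable (K) in
/-- The flexes of the Hesse pencil, each given by one representative in `K³`; there are nine of
them when `K` contains a primitive cube root of unity. -/
def hesseFlexes : Set (Fin 3 → K) :=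
  {p | ∃ k ζ, ζ ^ 3 = 1 ∧ sidePoint k ζ = p}

lemma sum_eq_cyclic {M : Type*} [AddCommMonoid M] (k : Fin 3) (x : Fin 3 → M) :
    ∑ i, x i = x k + x (k + 1) + x (k + 2) := by
  rw [← Equiv.sum_comp (Equiv.addLeft k), Fin.sum_univ_three]
  simp

lemma eq_single_add_single {M : Type*} [AddCommMonoid M] {v : Fin 3 → M} {k : Fin 3}
    (hk : v k = 0) : v = Pi.single (k + 2) (v (k + 2)) + Pi.single (k + 1) (v (k + 1)) := by
  funext i
  fin_cases k <;> fin_cases i <;> simp_all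

lemma sidePoint_apply_self (k : Fin 3) (ζ : K) : sidePoint k ζ k = 0 := by
  simp [sidePoint]

lemma sidePoint_apply_add_one (k : Fin 3) (ζ : K) : sidePoint k ζ (k + 1) = -ζ := by
  simp [sidePoint]

lemma sidePoint_apply_add_two (k : Fin 3) (ζ : K) : sidePoint k ζ (k + 2) = 1 := by
  simp [sidePoint]

lemma ne_zero_of_mem_hesseFlexes {p : Fin 3 → K} (hp : p ∈ hesseFlexes K) : p ≠ 0 := by
  obtain ⟨k, ζ, -, rfl⟩ := hp
  intro h
  simpa [sidePoint_apply_add_two] using congrFun h (k + 2)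

lemma forall_mem_hesseSubmodule_eval_eq_zero_iff {v : Fin 3 → K} :
    (∀ f ∈ hesseSubmodule K, eval v f = 0) ↔ ∑ i, v i ^ 3 = 0 ∧ ∏ i, v i = 0 := by
  change hesseSubmodule K ≤ LinearMap.ker (aeval v).toLinearMap ↔ _
  simp [hesseSubmodule, Submodule.span_le, Set.insert_subset_iff]

lemma isHomogeneous_of_mem_hesseSubmodule {f : MvPolynomial (Fin 3) K}
    (hf : f ∈ hesseSubmodule K) : f.IsHomogeneous 3 := by
  have hle : hesseSubmodule K ≤ homogeneousSubmodule (Fin 3) K 3 :=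
    Submodule.span_le.2 <| Set.insert_subset
      (IsHomogeneous.sum _ _ _ fun i _ => isHomogeneous_X_pow i 3)
      (Set.singleton_subset_iff.2 isHomogeneous_prod_X)
  exact hle hf

lemma eval_eq_zero_of_mem_hesseFlexes {p : Fin 3 → K} (hp : p ∈ hesseFlexes K)
    {f : MvPolynomial (Fin 3) K} (hf : f ∈ hesseSubmodule K) : eval p f = 0 := by
  obtain ⟨k, ζ, hζ, rfl⟩ := hp
  refine forall_mem_hesseSubmodule_eval_eq_zero_iff.2 ⟨?_, ?_⟩ f hf
  · rw [sum_eq_cyclic k, sidePoint_apply_self, sidePoint_apply_add_one, sidePoint_apply_add_two]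
    linear_combination -hζ
  · exact Finset.prod_eq_zero (Finset.mem_univ k) (sidePoint_apply_self k ζ)

lemma exists_eq_smul_of_forall_eval_eq_zero {v : Fin 3 → K} (hv : v ≠ 0)
    (h : ∀ f ∈ hesseSubmodule K, eval v f = 0) :
    ∃ p ∈ hesseFlexes K, ∃ c : K, c ≠ 0 ∧ v = c • p := by
  obtain ⟨hsum, hprod⟩ := forall_mem_hesseSubmodule_eval_eq_zero_iff.1 h
  obtain ⟨k, -, hk⟩ := Finset.prod_eq_zero_iff.1 hprod
  have hcubes : v (k + 1) ^ 3 + v (k + 2) ^ 3 = 0 := by simpa [sum_eq_cyclic k, hk] using hsum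
  have hc : v (k + 2) ≠ 0 := by
    intro hc
    have hc' : v (k + 1) = 0 := by simpa [hc] using hcubes
    exact hv (by rw [eq_single_add_single hk, hc, hc', Pi.single_zero, Pi.single_zero, add_zero])
  refine ⟨_, ⟨k, -v (k + 1) / v (k + 2), ?_, rfl⟩, v (k + 2), hc, ?_⟩
  · field_simp
    linear_combination -hcubes
  · conv_lhs => rw [eq_single_add_single hk]
    simp [sidePoint, smul_sub, ← Pi.single_smul', mul_div_cancel₀, hc, Pi.single_neg]

lemma exists_eq_smul_mem_hesseFlexes_iff {v : Fin 3 → K} (hv : v ≠ 0) :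
    (∃ p ∈ hesseFlexes K, ∃ c : K, c ≠ 0 ∧ v = c • p) ↔ ∀ f ∈ hesseSubmodule K, eval v f = 0 := by
  refine ⟨?_, exists_eq_smul_of_forall_eval_eq_zero hv⟩
  rintro ⟨p, hp, c, -, rfl⟩ f hf
  rw [eval_smul_of_isHomogeneous (isHomogeneous_of_mem_hesseSubmodule hf),
    eval_eq_zero_of_mem_hesseFlexes hp hf, mul_zero]

variable {ε : K}

lemma card_insert_zero_nthRootsFinset [DecidableEq K] (hε : IsPrimitiveRoot ε 3) :
    (insert 0 (Polynomial.nthRootsFinset 3 (1 : K))).card = 4 := by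
  rw [Finset.card_insert_of_notMem (by simp [Polynomial.mem_nthRootsFinset]),
    hε.card_nthRootsFinset]

lemma four_le_mk (hε : IsPrimitiveRoot ε 3) : 4 ≤ Cardinal.mk K := by
  classical
  have hle :=
    Cardinal.mk_set_le ((insert 0 (Polynomial.nthRootsFinset 3 (1 : K)) : Finset K) : Set K)
  simpa only [Cardinal.mk_coe_finset, Finset.coe_sort_coe, card_insert_zero_nthRootsFinset hε,
    Nat.cast_ofNat] using hle

lemma eval_eq_zero_on_side_of_eval_vertex_eq_zero (hε : IsPrimitiveRoot ε 3)
    {f : MvPolynomial (Fin 3) K} (hf : f.IsHomogeneous 3)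
    (hflex : ∀ p ∈ hesseFlexes K, eval p f = 0) {k : Fin 3}
    (hvertex : eval (Pi.single (k + 2) 1) f = 0) {v : Fin 3 → K} (hv : v k = 0) :
    eval v f = 0 := by
  classical
  have hzero : ∀ t ∈ insert 0 (Polynomial.nthRootsFinset 3 (1 : K)),
      eval (Pi.single (k + 2) 1 + t • -Pi.single (k + 1) 1) f = 0 := by
    simp only [Finset.forall_mem_insert, zero_smul, add_zero, hvertex, true_and]
    intro ζ hζ
    have hζ' : ζ ^ 3 = 1 := (Polynomial.mem_nthRootsFinset three_pos 1).1 hζ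
    simpa [sidePoint, ← Pi.single_smul', sub_eq_add_neg] using hflex _ ⟨k, ζ, hζ', rfl⟩
  have hline := eval_smul_add_smul_eq_zero_of_lt_card hf
    (card_insert_zero_nthRootsFinset hε ▸ Nat.lt_succ_self 3) hzero (v (k + 2)) (-v (k + 1))
  rw [eq_single_add_single hv]
  simpa [← Pi.single_smul'] using hline

lemma mem_hesseSubmodule_of_forall_eval_eq_zero (hε : IsPrimitiveRoot ε 3)
    {f : MvPolynomial (Fin 3) K} (hf : f.IsHomogeneous 3)
    (hflex : ∀ p ∈ hesseFlexes K, eval p f = 0) : f ∈ hesseSubmodule K := by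
  let α := eval (Pi.single 0 1) f
  let F : MvPolynomial (Fin 3) K := ∑ i, X i ^ 3
  have hF_mem : F ∈ hesseSubmodule K := Submodule.subset_span (.inl rfl)
  let h := f - α • F
  have hh : h.IsHomogeneous 3 := hf.sub <| isHomogeneous_of_mem_hesseSubmodule <|
    (hesseSubmodule K).smul_mem α hF_mem
  have hh_flex (p : Fin 3 → K) (hp : p ∈ hesseFlexes K) : eval p h = 0 := by
    simp [h, hflex p hp, eval_eq_zero_of_mem_hesseFlexes hp hF_mem]
  have hvertex : eval (Pi.single 0 1) h = 0 := by
    simp [h, F, α, Fin.sum_univ_three, smul_eval]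
  have hside {k : Fin 3} (hk : eval (Pi.single (k + 2) 1) h = 0) (v : Fin 3 → K) :
      v k = 0 → eval v h = 0 := eval_eq_zero_on_side_of_eval_vertex_eq_zero hε hh hh_flex hk
  have hside_one := hside (k := 1) hvertex
  have hside_zero := hside (k := 0) (hside_one (Pi.single 2 1) (by simp))
  have hside_two := hside (k := 2) (hside_zero (Pi.single 1 1) (by simp))
  obtain ⟨β, hβ⟩ := exists_eq_smul_prod_X_of_forall_eval_eq_zero hh
    (le_trans (by norm_num) (four_le_mk hε))
    (Fin.forall_fin_succ.2 ⟨hside_zero, Fin.forall_fin_two.2 ⟨hside_one, hside_two⟩⟩)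
  exact Submodule.mem_span_pair.2 ⟨α, β, by rw [← hβ, add_sub_cancel]⟩

lemma mem_hesseSubmodule_iff (hε : IsPrimitiveRoot ε 3) {f : MvPolynomial (Fin 3) K}
    (hf : f.IsHomogeneous 3) : f ∈ hesseSubmodule K ↔ ∀ p ∈ hesseFlexes K, eval p f = 0 :=
  ⟨fun hmem _ hp => eval_eq_zero_of_mem_hesseFlexes hp hmem,
    mem_hesseSubmodule_of_forall_eval_eq_zero hε hf⟩

theorem permutes_flexes_iff_preserves_pencil_general (hε : IsPrimitiveRoot ε 3)
    (g : Matrix.GeneralLinearGroup (Fin 3) K) :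
    (∀ p ∈ hesseFlexes K, ∃ q ∈ hesseFlexes K, ∃ c : K, c ≠ 0 ∧ g.val.mulVec p = c • q) ↔
      ∀ f ∈ hesseSubmodule K, aeval g.val.toMvPolynomial f ∈ hesseSubmodule K := by
  have hg_ne {p : Fin 3 → K} (hp : p ∈ hesseFlexes K) : g.val.mulVec p ≠ 0 := fun h0 =>
    ne_zero_of_mem_hesseFlexes hp <|
      Matrix.mulVec_injective_of_isUnit g.isUnit (h0.trans (Matrix.mulVec_zero _).symm)
  calc
    _ ↔ ∀ p ∈ hesseFlexes K, ∀ f ∈ hesseSubmodule K, eval (g.val.mulVec p) f = 0 :=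
      forall₂_congr fun _ hp => exists_eq_smul_mem_hesseFlexes_iff (hg_ne hp)
    _ ↔ ∀ f ∈ hesseSubmodule K, ∀ p ∈ hesseFlexes K,
        eval p (aeval g.val.toMvPolynomial f) = 0 := by
      simp only [eval_aeval_toMvPolynomial]
      exact forall₂_comm
    _ ↔ _ := forall₂_congr fun _ hf => (mem_hesseSubmodule_iff hε <|
      isHomogeneous_aeval_toMvPolynomial (isHomogeneous_of_mem_hesseSubmodule hf) _).symm

end HesseConfiguration

section Comparison

lemma mem_hessePencil_iff {f : MvPolynomial (Fin 3) ℂ} :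
    f ∈ hessePencil ↔ f ∈ hesseSubmodule ℂ := by
  simp only [hessePencil, hesseSubmodule, Submodule.mem_span_pair, Set.mem_ofPred_eq,
    smul_eq_C_mul, Fin.sum_univ_three, Fin.prod_univ_three, eq_comm]

lemma substGL_eq_aeval (g : Matrix.GeneralLinearGroup (Fin 3) ℂ) (f : MvPolynomial (Fin 3) ℂ) :
    substGL g f = aeval g.val.toMvPolynomial f := by
  unfold substGL Matrix.toMvPolynomial
  simp only [C_mul_X_eq_monomial]

lemma tpt_eq_sidePoint (ε : ℂ) (k : Fin 3) (j : ZMod 3) :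
    tpt ε (k, j) = sidePoint k (ε ^ j.val) := by
  funext i
  fin_cases k <;> fin_cases i <;> simp [tpt, ZMod.val, sidePoint]

lemma range_tpt {ε : ℂ} (hε : IsPrimitiveRoot ε 3) : Set.range (tpt ε) = hesseFlexes ℂ := by
  ext p
  constructor
  · rintro ⟨⟨k, j⟩, rfl⟩
    exact ⟨k, ε ^ j.val, by rw [pow_right_comm, hε.pow_eq_one, one_pow],
      (tpt_eq_sidePoint ε k j).symm⟩
  · rintro ⟨k, ζ, hζ, rfl⟩
    obtain ⟨i, hi, rfl⟩ := hε.eq_pow_of_pow_eq_one hζ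
    exact ⟨(k, (i : ZMod 3)), by rw [tpt_eq_sidePoint, ZMod.val_natCast_of_lt hi]⟩

end Comparison

/-- `g ∈ GL₃(ℂ)` permutes the nine flexes projectively iff the substitution `f ↦ f∘g`
maps the Hesse pencil into itself: `N_{PGL₃}(𝓕) = N_{PGL₃}(ℓ)`. -/
theorem permutes_flexes_iff_preserves_pencil (ε : ℂ) (hε : IsPrimitiveRoot ε 3)
    (g : Matrix.GeneralLinearGroup (Fin 3) ℂ) :
    (∀ ij : ZMod 3 × ZMod 3, ∃ (km : ZMod 3 × ZMod 3) (c : ℂ), c ≠ 0 ∧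
        Matrix.mulVec (g : Matrix (Fin 3) (Fin 3) ℂ) (tpt ε ij) = c • tpt ε km) ↔
      ∀ f ∈ hessePencil, substGL g f ∈ hessePencil := by
  have h := permutes_flexes_iff_preserves_pencil_general hε g
  rw [← range_tpt hε] at h
  simpa only [Set.forall_mem_range, Set.exists_range_iff, ← substGL_eq_aeval,
    ← mem_hessePencil_iff] using h
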